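/- arXiv:2411.04560 — 3 statements merged into one kernel-verified Lean document; each statement's English description precedes it below -/
import Mathlib

section
/- Let D be a digraph on a finite vertex set V in which every vertex has at least one in-neighbor, and suppose γ_t(D) = |V| − 1. Then for every subset S ⊆ V, the union of the out-neighborhoods of the vertices of S has cardinality at most |S| + 1, i.e., |⋃_{v∈S} N⁺(v)| ≤ |S| + 1. -/
/-- A set `S` is a total dominating set of the digraph `D` (given as its arc
relation) if every vertex has an in-neighbor belonging to `S`. -/
def TotalDomSet {V : Type} (D : V → V → Prop) (S : Set V) : Prop :=
  ∀ v : V, ∃ u ∈ S, D u v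

/-- The total domination number of a digraph: the least cardinality of a total
dominating set. -/
noncomputable def totalDomNum {V : Type} (D : V → V → Prop) : ℕ :=
  sInf {n | ∃ S : Set V, TotalDomSet D S ∧ S.ncard = n}

/-- `D` is an orientation of the simple graph `G`: every arc of `D` lies on an
edge of `G`, and every edge of `G` carries exactly one of the two possible arcs. -/
def IsOrientation {V : Type} (G : SimpleGraph V) (D : V → V → Prop) : Prop :=
  (∀ u v : V, D u v → G.Adj u v) ∧ ∀ u v : V, G.Adj u v → (D u v ↔ ¬ D v u)

/-- An orientation (digraph) is valid if every vertex has at least one in-neighbor. -/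
def IsValidOrientation {V : Type} (D : V → V → Prop) : Prop :=
  ∀ v : V, ∃ u : V, D u v

/-- The upper orientable total domination number of `G`. -/
noncomputable def DOMt {V : Type} [Fintype V] (G : SimpleGraph V) : ℕ :=
  sSup {n | ∃ D : V → V → Prop, IsOrientation G D ∧ IsValidOrientation D ∧ totalDomNum D = n}

/-- The lower orientable total domination number of `G`. -/
noncomputable def domt {V : Type} [Fintype V] (G : SimpleGraph V) : ℕ :=
  sInf {n | ∃ D : V → V → Prop, IsOrientation G D ∧ IsValidOrientation D ∧ totalDomNum D = n}

/-!
Adding to `S` one in-neighbor of each vertex outside `N⁺(S)` yields a total dominating set, so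
`γ_t(D) ≤ |S| + |V| - |N⁺(S)|`.
-/

section

variable {V : Type} {D : V → V → Prop} {S : Set V}

theorem TotalDomSet.totalDomNum_le_ncard (hS : TotalDomSet D S) : totalDomNum D ≤ S.ncard :=
  Nat.sInf_le ⟨S, hS, rfl⟩

theorem totalDomSet_union_image_compl {f : V → V}
    (hf : ∀ v ∈ (⋃ u ∈ S, {w : V | D u w})ᶜ, D (f v) v) :
    TotalDomSet D (S ∪ f '' (⋃ u ∈ S, {w : V | D u w})ᶜ) := by
  intro v
  by_cases hv : v ∈ ⋃ u ∈ S, {w : V | D u w}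
  · obtain ⟨u, huS, huv⟩ := Set.mem_iUnion₂.mp hv
    exact ⟨u, Or.inl huS, huv⟩
  · exact ⟨f v, Or.inr (Set.mem_image_of_mem f hv), hf v hv⟩

theorem totalDomNum_le_ncard_add_ncard_compl (hvalid : ∀ v : V, ∃ u : V, D u v)
    (hfin : (⋃ v ∈ S, {w : V | D v w})ᶜ.Finite) :
    totalDomNum D ≤ S.ncard + (⋃ v ∈ S, {w : V | D v w})ᶜ.ncard := by
  choose f hf using hvalid
  set U : Set V := ⋃ v ∈ S, {w : V | D v w}
  calc totalDomNum D
      ≤ (S ∪ f '' Uᶜ).ncard :=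
        (totalDomSet_union_image_compl fun v _ => hf v).totalDomNum_le_ncard
    _ ≤ S.ncard + (f '' Uᶜ).ncard := Set.ncard_union_le _ _
    _ ≤ S.ncard + Uᶜ.ncard := Nat.add_le_add_left (Set.ncard_image_le hfin) _

theorem stmt_3_general [Finite V] (hvalid : ∀ v : V, ∃ u : V, D u v) (S : Set V) :
    totalDomNum D + (⋃ v ∈ S, {w : V | D v w}).ncard ≤ S.ncard + Nat.card V := by
  rw [← Set.ncard_add_ncard_compl (⋃ v ∈ S, {w : V | D v w})]
  linarith [totalDomNum_le_ncard_add_ncard_compl hvalid (S := S) (Set.toFinite _)]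

end

/-- In a digraph with all in-degrees positive whose total domination number is
`|V| - 1`, no vertex set `S` dominates more than `|S| + 1` vertices. -/
theorem stmt_3 {V : Type} [Fintype V] (D : V → V → Prop)
    (hvalid : ∀ v : V, ∃ u : V, D u v)
    (hγ : totalDomNum D = Fintype.card V - 1) :
    ∀ S : Set V, (⋃ v ∈ S, {w : V | D v w}).ncard ≤ S.ncard + 1 := by
  intro S
  have hle := stmt_3_general hvalid S
  rw [hγ, Nat.card_eq_fintype_card] at hle
  omega
end

section
/- Let G be a finite connected simple graph having exactly one vertex of degree 1, exactly one vertex of degree 3, and all other vertices of degree 2 (so G is obtained from a cycle C_k, k ≥ 3, and a path P_ℓ, ℓ ≥ 2, by identifying one leaf of the path with a vertex of the cycle). Then G admits a valid orientation, and every valid orientation D of G satisfies γ_t(D) = |V(G)| − 1. -/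
/-!
A valid orientation is the same thing as a choice, for each vertex, of an incident edge pointing
into it, with distinct vertices choosing distinct edges. By Hall's theorem such a choice exists
whenever all degrees are at least two except for one degree at least one: the edges meeting a
set `s` of vertices number at least half the degree sum of `s`, which is at least `2 * #s - 1`,
so there are at least `#s` of them.

If there are only as many edges as vertices, the choice uses up every edge. Then every vertex has
a unique in-neighbor, so a total dominating set must contain every vertex that has an out-neighbor,
and a vertex has an out-neighbor unless it is a leaf.
-/

section Existence

variable {V : Type} {G : SimpleGraph V}

theorem exists_validOrientation_of_injective_incidence {f : V → Sym2 V}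
    (hinj : Function.Injective f) (hf : ∀ v, f v ∈ G.incidenceSet v) :
    ∃ D : V → V → Prop, IsOrientation G D ∧ IsValidOrientation D := by
  -- Edges outside the range of `f` are directed along a well-ordering of `V`.
  refine ⟨fun u v => G.Adj u v ∧ (f v = s(u, v) ∨ f u ≠ s(u, v) ∧ WellOrderingRel u v),
    ⟨fun u v h => h.1, fun u v huv => ?_⟩, fun v => ?_⟩
  · have not_both : ¬(f u = s(u, v) ∧ f v = s(u, v)) := fun ⟨hu, hv⟩ =>
      huv.ne (hinj (hu.trans hv.symm))
    have total : WellOrderingRel u v ∨ WellOrderingRel v u :=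
      (trichotomous_of WellOrderingRel u v).imp_right fun h => h.resolve_left huv.ne
    have asymm : WellOrderingRel u v → ¬WellOrderingRel v u := asymm_of WellOrderingRel
    simp only [Sym2.eq_swap (a := v), huv, huv.symm, true_and]
    tauto
  · obtain ⟨u, hu⟩ := Sym2.mem_iff_exists.1 (hf v).2
    have hvu : G.Adj v u := by
      simpa only [hu, SimpleGraph.mem_edgeSet] using (hf v).1
    exact ⟨u, hvu.symm, Or.inl (hu.trans Sym2.eq_swap)⟩

theorem sum_degree_le_two_mul_card_biUnion_incidenceFinset [G.LocallyFinite] [DecidableEq V]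
    (s : Finset V) :
    ∑ v ∈ s, G.degree v ≤ 2 * (s.biUnion fun v => G.incidenceFinset v).card := by
  set E := s.biUnion fun v => G.incidenceFinset v
  calc ∑ v ∈ s, G.degree v
      ≤ ∑ v ∈ s, (E.bipartiteAbove (fun v e => v ∈ e) v).card := by
        refine Finset.sum_le_sum fun v hv => ?_
        rw [← G.card_incidenceFinset_eq_degree v]
        refine Finset.card_le_card fun e he => ?_
        exact (Finset.mem_bipartiteAbove _).2
          ⟨Finset.mem_biUnion.2 ⟨v, hv, he⟩, ((G.mem_incidenceFinset v e).1 he).2⟩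
    _ = ∑ e ∈ E, (s.bipartiteBelow (fun v e => v ∈ e) e).card :=
        Finset.sum_card_bipartiteAbove_eq_sum_card_bipartiteBelow _
    _ ≤ ∑ _e ∈ E, 2 := by
        refine Finset.sum_le_sum fun e _ => ?_
        calc (s.bipartiteBelow (fun v e => v ∈ e) e).card
            ≤ e.toFinset.card := Finset.card_le_card fun v hv =>
              Sym2.mem_toFinset.2 ((Finset.mem_bipartiteBelow _).1 hv).2
          _ ≤ 2 := by rw [Sym2.card_toFinset]; split <;> omega
    _ = 2 * E.card := by rw [Finset.sum_const, smul_eq_mul, mul_comm]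

theorem exists_validOrientation_of_two_mul_card_le_sum_degree [G.LocallyFinite]
    (h : ∀ s : Finset V, 2 * s.card ≤ ∑ v ∈ s, G.degree v + 1) :
    ∃ D : V → V → Prop, IsOrientation G D ∧ IsValidOrientation D := by
  classical
  have hall_condition (s : Finset V) : s.card ≤ (s.biUnion fun v => G.incidenceFinset v).card := by
    have := h s
    have := sum_degree_le_two_mul_card_biUnion_incidenceFinset (G := G) s
    omega
  obtain ⟨f, hinj, hf⟩ :=
    (Finset.all_card_le_biUnion_card_iff_exists_injective _).1 hall_condition
  exact exists_validOrientation_of_injective_incidence hinj fun v =>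
    (G.mem_incidenceFinset v _).1 (hf v)

theorem exists_validOrientation_of_two_le_degree_of_ne [G.LocallyFinite] {a : V}
    (ha : 1 ≤ G.degree a) (h : ∀ v ≠ a, 2 ≤ G.degree v) :
    ∃ D : V → V → Prop, IsOrientation G D ∧ IsValidOrientation D := by
  classical
  refine exists_validOrientation_of_two_mul_card_le_sum_degree fun s => ?_
  calc 2 * s.card = ∑ _v ∈ s, 2 := by rw [Finset.sum_const, smul_eq_mul, mul_comm]
    _ ≤ ∑ v ∈ s, (G.degree v + if v = a then 1 else 0) := by
        refine Finset.sum_le_sum fun v _ => ?_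
        split_ifs with hv
        · subst hv; omega
        · exact h v hv
    _ ≤ ∑ v ∈ s, G.degree v + 1 := by
        rw [Finset.sum_add_distrib, Finset.sum_ite_eq']
        gcongr
        split_ifs <;> omega

end Existence

theorem totalDomNum_eq_ncard_of_existsUnique_inNeighbor {V : Type} [Finite V] {D : V → V → Prop}
    (h : ∀ v, ∃! u, D u v) : totalDomNum D = {u | ∃ v, D u v}.ncard := by
  refine IsLeast.csInf_eq ⟨⟨_, fun v => ?_, rfl⟩, ?_⟩
  · obtain ⟨u, hu, -⟩ := h v
    exact ⟨u, ⟨v, hu⟩, hu⟩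
  · rintro n ⟨S, hS, rfl⟩
    refine Set.ncard_le_ncard ?_
    rintro u ⟨v, hv⟩
    obtain ⟨w, hw, hwv⟩ := hS v
    rwa [(h v).unique hv hwv]

namespace IsOrientation

variable {V : Type} {G : SimpleGraph V} {D : V → V → Prop}

theorem not_symm (hD : IsOrientation G D) {u v : V} (huv : D u v) : ¬D v u :=
  (hD.2 u v (hD.1 u v huv)).1 huv

theorem adj_iff (hD : IsOrientation G D) {u v : V} : G.Adj u v ↔ D u v ∨ D v u :=
  ⟨fun h => or_iff_not_imp_right.2 (hD.2 u v h).2,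
    fun h => h.elim (hD.1 u v) fun h => (hD.1 v u h).symm⟩

theorem injective_inEdge (hD : IsOrientation G D) {p : V → V} (hp : ∀ v, D (p v) v) :
    Function.Injective fun v => s(p v, v) := by
  intro v w hvw
  rcases Sym2.eq_iff.1 hvw with ⟨-, h⟩ | ⟨hpv, hvp⟩
  · exact h
  · exact absurd (hvp ▸ hp w) (hD.not_symm (hpv ▸ hp v))

theorem existsUnique_inNeighbor [Fintype V] [Fintype G.edgeSet] (hD : IsOrientation G D)
    (hval : IsValidOrientation D) (hcard : G.edgeFinset.card ≤ Fintype.card V) (v : V) :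
    ∃! u, D u v := by
  choose p hp using hval
  have hsurj : Set.SurjOn (fun v => s(p v, v)) (Finset.univ : Finset V) G.edgeFinset :=
    Finset.surjOn_of_injOn_of_card_le _
      (fun v _ => SimpleGraph.mem_edgeFinset.2 (hD.1 _ _ (hp v)))
      (hD.injective_inEdge hp).injOn hcard
  refine ⟨p v, hp v, fun u huv => ?_⟩
  obtain ⟨w, -, hw⟩ := hsurj (show s(u, v) ∈ _ from SimpleGraph.mem_edgeFinset.2 (hD.1 u v huv))
  rcases Sym2.eq_iff.1 hw with ⟨hpw, rfl⟩ | ⟨hpw, rfl⟩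
  · exact hpw.symm
  · exact absurd (hpw ▸ hp w) (hD.not_symm huv)

theorem exists_outNeighbor_iff_degree_ne_one (hD : IsOrientation G D) {v : V}
    [Fintype (G.neighborSet v)] (hv : ∃! u, D u v) : (∃ w, D v w) ↔ G.degree v ≠ 1 := by
  obtain ⟨u, huv, hu⟩ := hv
  rw [ne_eq, SimpleGraph.degree_eq_one_iff_existsUnique_adj]
  constructor
  · rintro ⟨w, hvw⟩ hunique
    have hwu : w = u := hunique.unique (hD.adj_iff.2 (.inl hvw)) (hD.adj_iff.2 (.inr huv))
    exact hD.not_symm huv (hwu ▸ hvw)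
  · intro hnot
    by_contra! hout
    exact hnot ⟨u, hD.adj_iff.2 (.inr huv), fun w hvw =>
      hu w ((hD.adj_iff.1 hvw).resolve_left (hout w))⟩

theorem totalDomNum_eq_ncard_degree_ne_one [Fintype V] [DecidableRel G.Adj]
    (hD : IsOrientation G D) (hval : IsValidOrientation D)
    (hcard : G.edgeFinset.card ≤ Fintype.card V) :
    totalDomNum D = {v | G.degree v ≠ 1}.ncard := by
  have hin := hD.existsUnique_inNeighbor hval hcard
  rw [totalDomNum_eq_ncard_of_existsUnique_inNeighbor hin]
  simp only [hD.exists_outNeighbor_iff_degree_ne_one (hin _)]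

end IsOrientation

theorem card_edgeFinset_eq_card_of_degree {V : Type} [Fintype V] {G : SimpleGraph V}
    [DecidableRel G.Adj] {a b : V} (ha : G.degree a = 1) (hb : G.degree b = 3)
    (h : ∀ v, v ≠ a → v ≠ b → G.degree v = 2) : G.edgeFinset.card = Fintype.card V := by
  classical
  have hdeg (v : V) :
      G.degree v + (if v = a then 1 else 0) = 2 + (if v = b then 1 else 0) := by
    grind
  have hsum : ∑ v, G.degree v + 1 = Fintype.card V * 2 + 1 := by
    simpa only [Finset.sum_add_distrib, Finset.sum_ite_eq', Finset.mem_univ, if_true,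
      Finset.sum_const, Finset.card_univ, smul_eq_mul] using Fintype.sum_congr _ _ hdeg
  have := G.sum_degrees_eq_twice_card_edges
  omega

theorem stmt_11_general {V : Type} [Fintype V] (G : SimpleGraph V) (a b : V)
    (hdeg1 : (G.neighborSet a).ncard = 1)
    (hdeg3 : (G.neighborSet b).ncard = 3)
    (hdeg2 : ∀ v : V, v ≠ a → v ≠ b → (G.neighborSet v).ncard = 2) :
    (∃ D : V → V → Prop, IsOrientation G D ∧ IsValidOrientation D) ∧
      ∀ D : V → V → Prop, IsOrientation G D → IsValidOrientation D →
        totalDomNum D = Fintype.card V - 1 := by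
  classical
  have ncard_eq_degree (v : V) : (G.neighborSet v).ncard = G.degree v :=
    Set.ncard_eq_toFinset_card' _
  simp only [ncard_eq_degree] at hdeg1 hdeg3 hdeg2
  have two_le_degree (v : V) (hv : v ≠ a) : 2 ≤ G.degree v := by
    rcases eq_or_ne v b with rfl | hvb
    · omega
    · exact (hdeg2 v hv hvb).ge
  have nonleaves_eq : {v | G.degree v ≠ 1} = {a}ᶜ := by
    ext v
    exact ⟨fun hv hva => hv (hva ▸ hdeg1), fun hv => Nat.ne_of_gt (two_le_degree v hv)⟩
  refine ⟨exists_validOrientation_of_two_le_degree_of_ne hdeg1.ge two_le_degree,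
    fun D hD hval => ?_⟩
  have hcard := card_edgeFinset_eq_card_of_degree hdeg1 hdeg3 hdeg2
  rw [hD.totalDomNum_eq_ncard_degree_ne_one hval hcard.le, nonleaves_eq,
    Set.ncard_compl, Set.ncard_singleton, Nat.card_eq_fintype_card]

/-- If `G` is a finite connected simple graph with exactly one vertex of degree
1, exactly one vertex of degree 3 and all other vertices of degree 2 (so `G` is
a cycle with a pendant path attached), then `G` admits a valid orientation and
every valid orientation `D` of `G` satisfies `γ_t(D) = |V(G)| - 1`. -/
theorem stmt_11 {V : Type} [Fintype V] (G : SimpleGraph V) (hconn : G.Connected)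
    (a b : V) (hab : a ≠ b)
    (hdeg1 : (G.neighborSet a).ncard = 1)
    (hdeg3 : (G.neighborSet b).ncard = 3)
    (hdeg2 : ∀ v : V, v ≠ a → v ≠ b → (G.neighborSet v).ncard = 2) :
    (∃ D : V → V → Prop, IsOrientation G D ∧ IsValidOrientation D) ∧
      ∀ D : V → V → Prop, IsOrientation G D → IsValidOrientation D →
        totalDomNum D = Fintype.card V - 1 :=
  stmt_11_general G a b hdeg1 hdeg3 hdeg2
end

section
/- Let G be a finite connected simple graph that admits a valid orientation D with γ_t(D) = |V(G)| − 1. Then the number of edges of G satisfies |E(G)| ≤ 2|V(G)| − 2. -/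
/-!
Call a vertex *private* if it is the only in-neighbor of some vertex. If no total dominating set
omits two vertices, then any two distinct non-private vertices form the in-neighborhood of some
vertex. With `a` private and `b` other vertices, at least `a` vertices therefore have in-degree `1`
and at least `b.choose 2` have in-degree `2`; as `a + b = |V|`, this forces `b ≤ 3` and leaves at
most `b - b.choose 2 ≤ 1` vertices of larger in-degree. The sum of the in-degrees is `2 * |V| - n₁ +
∑ (d - 2)` (with truncated `d - 2`), where `n₁ ≥ a` counts the vertices of in-degree `1` and the
last sum has at most one nonzero term `d z - 2`; so it suffices that `d z ≤ a`, together with `2 ≤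
a` in case there is no such `z`. If `z` exists, then `b ≤ 2`, and `b = 2` gives `z` an out-neighbor,
so `d z ≤ |V| - b = a`. The bound `2 ≤ a` needs `5 ≤ |V|`; on at most four vertices the number of
all pairs is already small enough.
-/

section Counting

open Finset

/-- Tangent line bound for the convex function `b ↦ b.choose 2`. -/
lemma mul_le_choose_two_add_choose_two (m b : ℕ) :
    m * b ≤ b.choose 2 + (m + 1).choose 2 := by
  have hconsecutive : (0 : ℚ) ≤ (b - m) * (b - m - 1) := by
    obtain hbm | hmb := Nat.lt_or_ge m b
    · have : (m : ℚ) + 1 ≤ b := mod_cast hbm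
      exact mul_nonneg (by linarith) (by linarith)
    · have : (b : ℚ) ≤ m := mod_cast hmb
      exact mul_nonneg_of_nonpos_of_nonpos (by linarith) (by linarith)
  rw [← Nat.cast_le (α := ℚ)]
  push_cast [Nat.cast_choose_two]
  linarith

variable {ι : Type*} [Fintype ι]

/-- The subtraction is truncated; `#{i | f i = 1}` makes up for the terms with `f i = 1`. -/
lemma sum_add_card_filter_eq_one {f : ι → ℕ} (hf : ∀ i, 0 < f i) :
    ∑ i, f i + #{i | f i = 1} = 2 * Fintype.card ι + ∑ i, (f i - 2) := by
  have hpoint (i : ι) : f i + (if f i = 1 then 1 else 0) = 2 + (f i - 2) := by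
    have := hf i
    split_ifs <;> omega
  rw [card_filter, ← sum_add_distrib, sum_congr rfl fun i _ => hpoint i, sum_add_distrib]
  simp [mul_comm]

lemma card_filter_eq_one_add_eq_two_add_three_le (f : ι → ℕ) :
    #{i | f i = 1} + #{i | f i = 2} + #{i | 3 ≤ f i} ≤ Fintype.card ι := by
  simp only [card_filter, ← sum_add_distrib, Fintype.card_eq_sum_ones]
  refine sum_le_sum fun i _ => ?_
  split_ifs <;> omega

lemma choose_card_le_card_filter_card_eq {α : Type*} {f : ι → Finset α} {A : Finset α} {k : ℕ}
    (hA : ∀ e ∈ A.powersetCard k, ∃ i, f i = e) :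
    (#A).choose k ≤ #{i | #(f i) = k} := by
  rw [← card_powersetCard]
  refine card_le_card_of_surjOn f fun e he => ?_
  obtain ⟨i, rfl⟩ := hA e he
  exact ⟨i, by simpa using (mem_powersetCard.1 he).2, rfl⟩

end Counting

section InNbrs

open Finset

variable {V : Type*} [Fintype V] {D : V → V → Prop}

open Classical in
/-- The in-neighborhood of `w` in the digraph `D`. The out-neighborhood is
`inNbrs (flip D) w`. -/
noncomputable def inNbrs (D : V → V → Prop) (w : V) : Finset V :=
  {u | D u w}

lemma mem_inNbrs {u w : V} : u ∈ inNbrs D w ↔ D u w := by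
  simp [inNbrs]

open Classical in
/-- The private vertices of `D`: those that are the only in-neighbor of some vertex. They belong
to every total dominating set. -/
noncomputable def privateVerts (D : V → V → Prop) : Finset V :=
  {v | ∃ w, inNbrs D w = {v}}

lemma mem_privateVerts {v : V} : v ∈ privateVerts D ↔ ∃ w, inNbrs D w = {v} := by
  simp [privateVerts]

lemma card_privateVerts_le :
    #(privateVerts D) ≤ #{w | #(inNbrs D w) = 1} := by
  rw [← Nat.choose_one_right #(privateVerts D)]
  refine choose_card_le_card_filter_card_eq fun e he => ?_
  obtain ⟨hsub, hcard⟩ := mem_powersetCard.1 he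
  obtain ⟨v, rfl⟩ := card_eq_one.1 hcard
  exact mem_privateVerts.1 (singleton_subset_iff.1 hsub)

end InNbrs

namespace IsOrientation

open Finset

variable {V : Type} {G : SimpleGraph V} {D : V → V → Prop}

lemma asymm (hor : IsOrientation G D) {u v : V} (huv : D u v) : ¬ D v u :=
  (hor.2 u v (hor.1 u v huv)).1 huv

lemma arc_or_arc (hor : IsOrientation G D) {u v : V} (huv : G.Adj u v) : D u v ∨ D v u :=
  or_iff_not_imp_right.2 (hor.2 u v huv).2

variable [Fintype V]

lemma ncard_edgeSet (hor : IsOrientation G D) :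
    G.edgeSet.ncard = ∑ w, #(inNbrs D w) := by
  classical
  have hinj : Set.InjOn (fun a : Σ _ : V, V => s(a.2, a.1)) (univ.sigma (inNbrs D)) := by
    rintro ⟨v, u⟩ huv ⟨v', u'⟩ huv' heq
    simp only [coe_sigma, Set.mem_sigma_iff, mem_coe, mem_inNbrs, mem_univ, true_and] at huv huv'
    rcases Sym2.eq_iff.1 heq with ⟨rfl, rfl⟩ | ⟨rfl, rfl⟩
    · rfl
    · exact absurd huv' (hor.asymm huv)
  have himage : G.edgeSet = (univ.sigma (inNbrs D)).image fun a => s(a.2, a.1) := by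
    ext e
    induction e with | _ u v
    simp only [SimpleGraph.mem_edgeSet, coe_image, Set.mem_image, mem_coe, mem_sigma, mem_univ,
      true_and, mem_inNbrs, Sigma.exists]
    constructor
    · intro huv
      rcases hor.arc_or_arc huv with h | h
      · exact ⟨v, u, h, rfl⟩
      · exact ⟨u, v, h, Sym2.eq_swap⟩
    · rintro ⟨y, x, hxy, heq⟩
      rw [← SimpleGraph.mem_edgeSet, ← heq]
      exact hor.1 x y hxy
  rw [himage, Set.ncard_coe_finset, card_image_of_injOn hinj, card_sigma]

lemma card_inNbrs_add_card_outNbrs_lt (hor : IsOrientation G D) (z : V) :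
    #(inNbrs D z) + #(inNbrs (flip D) z) < Fintype.card V := by
  classical
  have hdisj : Disjoint (inNbrs D z) (inNbrs (flip D) z) :=
    disjoint_left.2 fun u hin hout =>
      have hzu : flip D u z := mem_inNbrs.1 hout
      hor.asymm (mem_inNbrs.1 hin) hzu
  have hloop : ¬ D z z := fun h => hor.asymm h h
  rw [← card_union_of_disjoint hdisj]
  exact card_lt_univ_of_notMem (x := z) (by simp [mem_inNbrs, flip, hloop])

end IsOrientation

section Domination

open Finset

variable {V : Type} [Fintype V] {G : SimpleGraph V} {D : V → V → Prop}

lemma IsValidOrientation.inNbrs_nonempty (hvalid : IsValidOrientation D) (w : V) :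
    (inNbrs D w).Nonempty := by
  obtain ⟨u, hu⟩ := hvalid w
  exact ⟨u, mem_inNbrs.2 hu⟩

lemma exists_inNbrs_subset_of_lt_totalDomNum {T : Finset V}
    (hT : Fintype.card V - #T < totalDomNum D) : ∃ w, inNbrs D w ⊆ T := by
  classical
  by_contra! hnot
  have hdom : TotalDomSet D (Tᶜ : Finset V) := fun w => by
    obtain ⟨u, hu, huT⟩ := not_subset.1 (hnot w)
    exact ⟨u, mem_coe.2 (mem_compl.2 huT), mem_inNbrs.1 hu⟩
  refine hT.not_ge (Nat.sInf_le ⟨_, hdom, ?_⟩)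
  rw [Set.ncard_coe_finset, card_compl]

section DecidableEq

variable [DecidableEq V]

lemma exists_inNbrs_eq_pair (hvalid : IsValidOrientation D)
    (hγ : Fintype.card V - 1 ≤ totalDomNum D) {u v : V} (hu : u ∉ privateVerts D)
    (hv : v ∉ privateVerts D) (huv : u ≠ v) : ∃ w, inNbrs D w = {u, v} := by
  have hcard : Fintype.card V - #{u, v} < totalDomNum D := by
    have := card_le_univ {u, v}
    rw [card_pair huv] at this ⊢
    omega
  obtain ⟨w, hw⟩ := exists_inNbrs_subset_of_lt_totalDomNum hcard
  rw [← coe_subset, coe_pair, Set.subset_pair_iff_eq] at hw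
  norm_cast at hw
  rcases hw with hempty | hsingle | hsingle | hpair
  · exact absurd hempty (hvalid.inNbrs_nonempty w).ne_empty
  · exact absurd (mem_privateVerts.2 ⟨w, hsingle⟩) hu
  · exact absurd (mem_privateVerts.2 ⟨w, hsingle⟩) hv
  · exact ⟨w, hpair⟩

lemma choose_card_compl_privateVerts_le (hvalid : IsValidOrientation D)
    (hγ : Fintype.card V - 1 ≤ totalDomNum D) :
    (#(privateVerts D)ᶜ).choose 2 ≤ #{w | #(inNbrs D w) = 2} := by
  refine choose_card_le_card_filter_card_eq fun e he => ?_
  obtain ⟨hsub, hcard⟩ := mem_powersetCard.1 he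
  obtain ⟨u, v, huv, rfl⟩ := card_eq_two.1 hcard
  exact exists_inNbrs_eq_pair hvalid hγ (mem_compl.1 (hsub (by simp)))
    (mem_compl.1 (hsub (by simp))) huv

lemma card_filter_three_le_card_inNbrs_add_choose_le (hvalid : IsValidOrientation D)
    (hγ : Fintype.card V - 1 ≤ totalDomNum D) :
    #{w | 3 ≤ #(inNbrs D w)} + (#(privateVerts D)ᶜ).choose 2 ≤ #(privateVerts D)ᶜ := by
  have hone : #(privateVerts D) ≤ #{w | #(inNbrs D w) = 1} := card_privateVerts_le
  have htwo := choose_card_compl_privateVerts_le hvalid hγ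
  have hall := card_filter_eq_one_add_eq_two_add_three_le fun w => #(inNbrs D w)
  have hcompl := card_add_card_compl (privateVerts D)
  omega

lemma exists_arc_of_one_lt_card_compl_privateVerts (hvalid : IsValidOrientation D)
    (hγ : Fintype.card V - 1 ≤ totalDomNum D) (hB : 1 < #(privateVerts D)ᶜ) (z : V) :
    ∃ y, D z y := by
  by_cases hz : z ∈ privateVerts D
  · obtain ⟨w, hw⟩ := mem_privateVerts.1 hz
    exact ⟨w, mem_inNbrs.1 (by simp [hw])⟩
  · obtain ⟨u, hu, huz⟩ := exists_mem_ne hB z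
    obtain ⟨w, hw⟩ := exists_inNbrs_eq_pair hvalid hγ (mem_compl.1 hu) hz huz
    exact ⟨w, mem_inNbrs.1 (by simp [hw])⟩

lemma IsOrientation.card_inNbrs_le_card_privateVerts (hor : IsOrientation G D)
    (hvalid : IsValidOrientation D) (hγ : Fintype.card V - 1 ≤ totalDomNum D)
    (hB : #(privateVerts D)ᶜ ≤ 2) (z : V) : #(inNbrs D z) ≤ #(privateVerts D) := by
  have hlt := hor.card_inNbrs_add_card_outNbrs_lt z
  have hcompl := card_add_card_compl (privateVerts D)
  obtain hB' | hB' := le_or_gt #(privateVerts D)ᶜ 1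
  · omega
  · obtain ⟨y, hy⟩ := exists_arc_of_one_lt_card_compl_privateVerts hvalid hγ hB' z
    have hout : 0 < #(inNbrs (flip D) z) := card_pos.2 ⟨y, mem_inNbrs.2 hy⟩
    omega

end DecidableEq

lemma IsOrientation.sum_card_inNbrs_sub_two_add_two_le (hor : IsOrientation G D)
    (hvalid : IsValidOrientation D) (hγ : Fintype.card V - 1 ≤ totalDomNum D)
    (hV : 5 ≤ Fintype.card V) :
    ∑ w, (#(inNbrs D w) - 2) + 2 ≤ #(privateVerts D) := by
  classical
  set L : Finset V := {w | 3 ≤ #(inNbrs D w)} with hL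
  have hlarge : #L + (#(privateVerts D)ᶜ).choose 2 ≤ #(privateVerts D)ᶜ :=
    card_filter_three_le_card_inNbrs_add_choose_le hvalid hγ
  have hL_le_one : #L ≤ 1 := by
    have : 1 * #(privateVerts D)ᶜ ≤ (#(privateVerts D)ᶜ).choose 2 + 1 :=
      mul_le_choose_two_add_choose_two 1 _
    omega
  have hL_add_le_three : #L + #(privateVerts D)ᶜ ≤ 3 := by
    have : 2 * #(privateVerts D)ᶜ ≤ (#(privateVerts D)ᶜ).choose 2 + 3 :=
      mul_le_choose_two_add_choose_two 2 _
    omega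
  have hcompl := card_add_card_compl (privateVerts D)
  have hsum : ∑ w, (#(inNbrs D w) - 2) = ∑ w ∈ L, (#(inNbrs D w) - 2) :=
    (sum_subset (subset_univ L) fun w _ hw => by
      simp only [hL, mem_filter_univ] at hw
      omega).symm
  rw [hsum]
  obtain hnone | hone : #L = 0 ∨ #L = 1 := Nat.le_one_iff_eq_zero_or_eq_one.1 hL_le_one
  · rw [card_eq_zero.1 hnone, sum_empty]
    omega
  · obtain ⟨z, hz⟩ := card_eq_one.1 hone
    have hzL : z ∈ L := hz ▸ mem_singleton_self z
    have hz3 : 3 ≤ #(inNbrs D z) := (mem_filter_univ z).1 hzL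
    have hza := hor.card_inNbrs_le_card_privateVerts hvalid hγ (by omega) z
    rw [hz, sum_singleton]
    omega

end Domination

lemma ncard_edgeSet_le_choose_two {V : Type*} [Fintype V] (G : SimpleGraph V) :
    G.edgeSet.ncard ≤ (Fintype.card V).choose 2 := by
  classical
  rw [← SimpleGraph.coe_edgeFinset, Set.ncard_coe_finset]
  exact SimpleGraph.card_edgeFinset_le_card_choose_two

theorem stmt_17_general {V : Type} [Fintype V] (G : SimpleGraph V) (D : V → V → Prop)
    (hor : IsOrientation G D) (hvalid : IsValidOrientation D)
    (hγ : Fintype.card V - 1 ≤ totalDomNum D) :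
    G.edgeSet.ncard ≤ 2 * Fintype.card V - 2 := by
  classical
  obtain hV | hV := le_or_gt 5 (Fintype.card V)
  · have hsum := sum_add_card_filter_eq_one fun w => (hvalid.inNbrs_nonempty w).card_pos
    have hexcess := hor.sum_card_inNbrs_sub_two_add_two_le hvalid hγ hV
    have hprivate := card_privateVerts_le (D := D)
    rw [hor.ncard_edgeSet]
    omega
  · refine (ncard_edgeSet_le_choose_two G).trans ?_
    interval_cases Fintype.card V <;> decide

/-- A finite connected simple graph admitting a valid orientation with total
domination number `|V(G)| - 1` has at most `2|V(G)| - 2` edges. -/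
theorem stmt_17 {V : Type} [Fintype V] (G : SimpleGraph V) (hconn : G.Connected)
    (D : V → V → Prop) (hor : IsOrientation G D) (hvalid : IsValidOrientation D)
    (hγ : totalDomNum D = Fintype.card V - 1) :
    G.edgeSet.ncard ≤ 2 * Fintype.card V - 2 :=
  stmt_17_general G D hor hvalid hγ.ge
end
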